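/- The metric space of all simplicial complexes over S, equipped with the distance d, is complete: for every sequence (𝒦ₙ) of simplicial complexes over S such that for every ε > 0 there is N with d(𝒦ₘ, 𝒦ₙ) < ε for all m, n ≥ N, there exists a simplicial complex 𝒦 over S with d(𝒦ₙ, 𝒦) → 0. -/

import Mathlib

open scoped BigOperators

/-- A simplicial complex over the vertex set `S`: a nonempty collection of
nonempty finite subsets of `S`, closed under taking nonempty subsets. -/
def IsSimplicialComplex {S : Type*} (K : Set (Finset S)) : Prop :=
  K.Nonempty ∧ (∀ F ∈ K, F.Nonempty) ∧
    ∀ F ∈ K, ∀ G : Finset S, G.Nonempty → G ⊆ F → G ∈ K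

/-- Halved ℓ¹ distance between finitely supported real functions:
`d(α,β) = (1/2) ∑ₛ |α s - β s|`. -/
noncomputable def l1dist {S : Type*} (α β : S →₀ ℝ) : ℝ :=
  (1 / 2) * (α - β).sum fun _ x => |x|

/-- The ℓ¹ geometric realization of a collection `K` of finite subsets of `S`:
finitely supported probability vectors whose support is a face of `K`. -/
def realization {S : Type*} (K : Set (Finset S)) : Set (S →₀ ℝ) :=
  {α | (∀ s, 0 ≤ α s) ∧ (α.sum fun _ x => x) = 1 ∧ α.support ∈ K}

/-- Distance from a point to a set of finitely supported functions. -/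
noncomputable def distToSet {S : Type*} (α : S →₀ ℝ) (X : Set (S →₀ ℝ)) : ℝ :=
  sInf (l1dist α '' X)

/-- One-sided Hausdorff distance between (the realizations of) two complexes. -/
noncomputable def hdelta {S : Type*} (K₁ K₂ : Set (Finset S)) : ℝ :=
  sSup ((fun α => distToSet α (realization K₂)) '' realization K₁)

/-- Hausdorff distance between (the realizations of) two simplicial complexes. -/
noncomputable def hdist {S : Type*} (K₁ K₂ : Set (Finset S)) : ℝ :=
  max (hdelta K₁ K₂) (hdelta K₂ K₁)

/-- `d(F, K)`: supremum of distances to `|K|₁` over probability vectors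
supported exactly on `F`. -/
noncomputable def dFace {S : Type*} (F : Finset S) (K : Set (Finset S)) : ℝ :=
  sSup ((fun α => distToSet α (realization K)) ''
    {α : S →₀ ℝ | (∀ s, 0 ≤ α s) ∧ (α.sum fun _ x => x) = 1 ∧ α.support = F})

/-- The `n`-skeleton of a simplicial complex. -/
def skeleton {S : Type*} (n : ℕ) (K : Set (Finset S)) : Set (Finset S) :=
  {F | F ∈ K ∧ F.card ≤ n + 1}

lemma l1dist_eq_aux {S : Type*} {α β : S →₀ ℝ} (hα : α.sum (fun _ x => x) = 1)
    (hβ0 : ∀ s, 0 ≤ β s) (hβ : β.sum (fun _ x => x) = 1) :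
    l1dist α β = ∑ s ∈ α.support, max (α s - β s) 0 := by
  classical
  have h1 : (α - β).sum (fun _ x => |x|) = ∑ s ∈ α.support ∪ β.support, |α s - β s| := by
    rw [Finsupp.sum_of_support_subset _ (Finsupp.support_sub) _ (by simp)]
    simp
  have h2 : ∑ s ∈ α.support ∪ β.support, α s = 1 := by
    rw [← hα, Finsupp.sum_of_support_subset _ Finset.subset_union_left _ (by simp)]
  have h3 : ∑ s ∈ α.support ∪ β.support, β s = 1 := by
    rw [← hβ, Finsupp.sum_of_support_subset _ Finset.subset_union_right _ (by simp)]
  have h4 : ∑ s ∈ α.support, max (α s - β s) 0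
      = ∑ s ∈ α.support ∪ β.support, max (α s - β s) 0 := by
    apply Finset.sum_subset Finset.subset_union_left
    intro s _ hs
    have : α s = 0 := by simpa using hs
    rw [this]
    apply max_eq_right
    linarith [hβ0 s]
  have h5 : ∀ x : ℝ, |x| = 2 * max x 0 - x := by
    intro x
    rcases le_total 0 x with h | h
    · rw [abs_of_nonneg h, max_eq_left h]; ring
    · rw [abs_of_nonpos h, max_eq_right h]; ring
  rw [l1dist, h1, h4]
  simp_rw [h5]
  rw [Finset.sum_sub_distrib, Finset.sum_sub_distrib, h2, h3, ← Finset.mul_sum]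
  ring

lemma l1dist_nonneg_aux {S : Type*} (α β : S →₀ ℝ) : 0 ≤ l1dist α β := by
  unfold l1dist Finsupp.sum
  positivity

lemma distToSet_nonneg_aux {S : Type*} (α : S →₀ ℝ) (X : Set (S →₀ ℝ)) :
    0 ≤ distToSet α X := by
  apply Real.sInf_nonneg
  rintro _ ⟨β, _, rfl⟩
  exact l1dist_nonneg_aux α β

lemma distToSet_le_aux {S : Type*} {α β : S →₀ ℝ} {X : Set (S →₀ ℝ)} (h : β ∈ X) :
    distToSet α X ≤ l1dist α β := by
  refine csInf_le ?_ (Set.mem_image_of_mem _ h)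
  refine ⟨0, ?_⟩
  rintro _ ⟨β, _, rfl⟩
  exact l1dist_nonneg_aux α β

lemma hdelta_nonneg_aux {S : Type*} (K₁ K₂ : Set (Finset S)) : 0 ≤ hdelta K₁ K₂ := by
  apply Real.sSup_nonneg
  rintro _ ⟨β, _, rfl⟩
  exact distToSet_nonneg_aux _ _

lemma hdelta_le_aux {S : Type*} {K₁ K₂ : Set (Finset S)} {ε : ℝ} (hε : 0 ≤ ε)
    (h : ∀ α ∈ realization K₁, ∃ β ∈ realization K₂, l1dist α β ≤ ε) :
    hdelta K₁ K₂ ≤ ε := by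
  apply Real.sSup_le _ hε
  rintro _ ⟨α, hα, rfl⟩
  obtain ⟨β, hβ, h⟩ := h α hα
  exact (distToSet_le_aux hβ).trans h

/-- The uniform probability vector on a face. -/
lemma exists_unif_aux {S : Type*} (F : Finset S) (hF : F.Nonempty) :
    ∃ α : S →₀ ℝ, (∀ s, 0 ≤ α s) ∧ (α.sum fun _ x => x) = 1 ∧ α.support = F ∧
      ∀ s ∈ F, α s = 1 / (F.card : ℝ) := by
  classical
  have hc : (0 : ℝ) < F.card := by exact_mod_cast hF.card_pos
  have hv : ∀ s ∈ F, (Finsupp.indicator F (fun _ _ => 1 / (F.card : ℝ))) s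
      = 1 / (F.card : ℝ) := by
    intro s hs
    rw [Finsupp.indicator_of_mem hs]
  have hs : (Finsupp.indicator F (fun _ _ => 1 / (F.card : ℝ))).support = F := by
    ext s
    rw [Finsupp.mem_support_iff]
    by_cases h : s ∈ F
    · rw [hv s h]
      simp [h, hc.ne']
    · simp [Finsupp.indicator_of_notMem h, h]
  refine ⟨Finsupp.indicator F (fun _ _ => 1 / (F.card : ℝ)), ?_, ?_, hs, hv⟩
  · intro s
    by_cases h : s ∈ F
    · rw [hv s h]; positivity
    · rw [Finsupp.indicator_of_notMem h]
  · rw [Finsupp.sum, hs, Finset.sum_congr rfl hv]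
    simp [hc.ne']

lemma realization_nonempty_aux {S : Type*} {K : Set (Finset S)} (hK : IsSimplicialComplex K) :
    (realization K).Nonempty := by
  obtain ⟨⟨F, hF⟩, hne, -⟩ := hK
  obtain ⟨α, h0, h1, hs, -⟩ := exists_unif_aux F (hne F hF)
  exact ⟨α, h0, h1, hs ▸ hF⟩

lemma l1dist_le_one_aux {S : Type*} {α β : S →₀ ℝ} (hα0 : ∀ s, 0 ≤ α s)
    (hα : α.sum (fun _ x => x) = 1)
    (hβ0 : ∀ s, 0 ≤ β s) (hβ : β.sum (fun _ x => x) = 1) : l1dist α β ≤ 1 := by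
  rw [l1dist_eq_aux hα hβ0 hβ, ← hα, Finsupp.sum]
  apply Finset.sum_le_sum
  intro s _
  exact max_le (by linarith [hβ0 s]) (hα0 s)

lemma exists_close_aux {S : Type*} {K₁ K₂ : Set (Finset S)}
    (hK₂ : IsSimplicialComplex K₂) {ε : ℝ} (h : hdist K₁ K₂ < ε) {α : S →₀ ℝ}
    (hα : α ∈ realization K₁) : ∃ β ∈ realization K₂, l1dist α β < ε := by
  have hne := realization_nonempty_aux hK₂
  have h1 : distToSet α (realization K₂) ≤ hdelta K₁ K₂ := by
    refine le_csSup ?_ (Set.mem_image_of_mem _ hα)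
    refine ⟨1, ?_⟩
    rintro _ ⟨γ, hγ, rfl⟩
    obtain ⟨β, hβ⟩ := hne
    exact (distToSet_le_aux hβ).trans (l1dist_le_one_aux hγ.1 hγ.2.1 hβ.1 hβ.2.1)
  have h2 : distToSet α (realization K₂) < ε := lt_of_le_of_lt (h1.trans (le_max_left _ _)) h
  obtain ⟨_, ⟨β, hβ, rfl⟩, hlt⟩ := exists_lt_of_csInf_lt (hne.image _) h2
  exact ⟨β, hβ, hlt⟩

lemma mem_of_close_aux {S : Type*} {K₁ K₂ : Set (Finset S)}
    (hK₂ : IsSimplicialComplex K₂) {F : Finset S} (hF : F.Nonempty) (hF₁ : F ∈ K₁)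
    (h : hdist K₁ K₂ < 1 / (F.card : ℝ)) : F ∈ K₂ := by
  obtain ⟨α, h0, h1, hs, hv⟩ := exists_unif_aux F hF
  obtain ⟨β, hβ, hd⟩ := exists_close_aux hK₂ h (α := α) ⟨h0, h1, hs ▸ hF₁⟩
  apply hK₂.2.2 _ hβ.2.2 F hF
  intro s hsF
  rw [Finsupp.mem_support_iff]
  intro hz
  rw [l1dist_eq_aux h1 hβ.1 hβ.2.1, hs] at hd
  have := Finset.single_le_sum (f := fun s => max (α s - β s) 0)
    (fun i _ => le_max_right _ _) hsF
  simp only [hz, hv s hsF, sub_zero] at this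
  linarith [le_max_left (1 / (F.card : ℝ)) 0]

/-- Truncating a nearby vector to the support does not increase the distance. -/
lemma truncate_aux {S : Type*} {α γ : S →₀ ℝ}
    (hα : α.sum (fun _ x => x) = 1)
    (hγ0 : ∀ s, 0 ≤ γ s) (hγ : γ.sum (fun _ x => x) = 1) (hd : l1dist α γ < 1) :
    ∃ β : S →₀ ℝ, (∀ s, 0 ≤ β s) ∧ (β.sum fun _ x => x) = 1 ∧ β.support ⊆ γ.support ∧
      β.support ⊆ α.support ∧ β.support.Nonempty ∧ l1dist α β ≤ l1dist α γ := by
  classical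
  set g : S →₀ ℝ := γ.filter (· ∈ α.support) with hg
  have hgv : ∀ s ∈ α.support, g s = γ s := fun s hs => Finsupp.filter_apply_pos _ _ hs
  have hg0 : ∀ s, 0 ≤ g s := by
    intro s
    rw [hg, Finsupp.filter_apply]
    split_ifs
    exacts [hγ0 s, le_rfl]
  have hgle : ∀ s, g s ≤ γ s := by
    intro s
    rw [hg, Finsupp.filter_apply]
    split_ifs
    exacts [le_rfl, hγ0 s]
  have hgγ : g.support ⊆ γ.support := by
    rw [hg, Finsupp.support_filter]; exact Finset.filter_subset _ _
  have hgα : g.support ⊆ α.support := by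
    intro s hs
    rw [hg, Finsupp.support_filter] at hs
    exact (Finset.mem_filter.1 hs).2
  set c := g.sum (fun _ x => x) with hc
  have hcα : c = ∑ s ∈ α.support, γ s := by
    rw [hc, Finsupp.sum_of_support_subset _ hgα _ (by simp)]
    exact Finset.sum_congr rfl hgv
  have hc1 : c ≤ 1 := by
    rw [hc, Finsupp.sum_of_support_subset _ hgγ _ (by simp), ← hγ, Finsupp.sum]
    exact Finset.sum_le_sum fun s _ => hgle s
  have hc0 : 0 < c := by
    rw [l1dist_eq_aux hα hγ0 hγ] at hd
    have : ∑ s ∈ α.support, (α s - γ s) ≤ ∑ s ∈ α.support, max (α s - γ s) 0 :=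
      Finset.sum_le_sum fun s _ => le_max_left _ _
    rw [Finset.sum_sub_distrib, ← hcα] at this
    have h1 : ∑ s ∈ α.support, α s = 1 := hα
    linarith
  have hsupp : (c⁻¹ • g).support = g.support := Finsupp.support_smul_eq (inv_ne_zero hc0.ne')
  have hβ0 : ∀ s, 0 ≤ (c⁻¹ • g) s := by
    intro s
    have := hg0 s
    simp only [Finsupp.smul_apply, smul_eq_mul]
    positivity
  have hβ1 : ((c⁻¹ • g).sum fun _ x => x) = 1 := by
    rw [Finsupp.sum, hsupp]
    simp only [Finsupp.smul_apply, smul_eq_mul]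
    rw [← Finset.mul_sum]
    exact inv_mul_cancel₀ hc0.ne'
  refine ⟨c⁻¹ • g, hβ0, hβ1, hsupp ▸ hgγ, hsupp ▸ hgα, ?_, ?_⟩
  · rw [Finset.nonempty_iff_ne_empty]
    intro h
    rw [Finsupp.sum, h] at hβ1
    simp at hβ1
  · rw [l1dist_eq_aux hα hγ0 hγ, l1dist_eq_aux hα hβ0 hβ1]
    apply Finset.sum_le_sum
    intro s hs
    apply max_le_max _ le_rfl
    have h1 : 1 ≤ c⁻¹ := (one_le_inv₀ hc0).2 hc1
    have h2 := hg0 s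
    simp only [Finsupp.smul_apply, smul_eq_mul]
    rw [← hgv s hs]
    nlinarith

/-- The space of simplicial complexes over `S` with the Hausdorff distance is
complete: every Cauchy sequence of simplicial complexes converges to a
simplicial complex. -/
theorem stmt18 {S : Type*} (K : ℕ → Set (Finset S))
    (hK : ∀ n, IsSimplicialComplex (K n))
    (hcauchy : ∀ ε : ℝ, 0 < ε → ∃ N : ℕ, ∀ m n : ℕ, N ≤ m → N ≤ n →
      hdist (K m) (K n) < ε) :
    ∃ L : Set (Finset S), IsSimplicialComplex L ∧
      Filter.Tendsto (fun n => hdist (K n) L) Filter.atTop (nhds 0) := by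
  classical
  -- membership in `L`: faces of `K n` for all large `n`
  let L : Set (Finset S) := {F | ∃ N, ∀ n, N ≤ n → F ∈ K n}
  refine ⟨L, ⟨?_, ?_, ?_⟩, ?_⟩
  · obtain ⟨N, hN⟩ := hcauchy 1 one_pos
    obtain ⟨⟨F, hF⟩, hne, hsub⟩ := hK N
    obtain ⟨s, hs⟩ := hne F hF
    have hsK : {s} ∈ K N := hsub F hF {s} (by simp) (by simpa using hs)
    refine ⟨{s}, N, fun n hn => mem_of_close_aux (hK n) (by simp) hsK ?_⟩
    simpa using hN N n le_rfl hn
  · rintro F ⟨N, hN⟩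
    exact (hK N).2.1 F (hN N le_rfl)
  · rintro F ⟨N, hN⟩ G hG hGF
    exact ⟨N, fun n hn => (hK n).2.2 F (hN n hn) G hG hGF⟩
  · rw [Metric.tendsto_atTop]
    intro ε hε
    set δ := min (ε / 2) 1 with hδ
    have hδ0 : 0 < δ := by positivity
    have hδε : δ < ε := lt_of_le_of_lt (min_le_left _ _) (by linarith)
    obtain ⟨N, hN⟩ := hcauchy δ hδ0
    refine ⟨N, fun n hn => ?_⟩
    rw [Real.dist_eq, sub_zero, hdist, abs_of_nonneg ((hdelta_nonneg_aux _ _).trans (le_max_left _ _))]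
    refine lt_of_le_of_lt (max_le ?_ ?_) hδε
    · apply hdelta_le_aux hδ0.le
      intro α hα
      have hαne : α.support.Nonempty := (hK n).2.1 _ hα.2.2
      have hcard : (0 : ℝ) < α.support.card := by exact_mod_cast hαne.card_pos
      obtain ⟨M, hM⟩ := hcauchy (1 / (α.support.card : ℝ)) (by positivity)
      obtain ⟨γ, hγ, hd⟩ := exists_close_aux (hK (max M N))
        (hN n (max M N) hn (le_max_right _ _)) hα
      obtain ⟨β, hβ0, hβ1, hβγ, hβα, hβne, hle⟩ := truncate_aux hα.2.1 hγ.1 hγ.2.1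
        (lt_of_lt_of_le hd (min_le_right _ _))
      refine ⟨β, ⟨hβ0, hβ1, M, fun k hk => ?_⟩, hle.trans hd.le⟩
      apply mem_of_close_aux (hK k) hβne ((hK (max M N)).2.2 _ hγ.2.2 _ hβne hβγ)
      refine lt_of_lt_of_le (hM _ k (le_max_left _ _) hk) ?_
      apply one_div_le_one_div_of_le
      · exact_mod_cast hβne.card_pos
      · exact_mod_cast Finset.card_le_card hβα
    · apply hdelta_le_aux hδ0.le
      rintro α ⟨h0, h1, M, hM⟩
      obtain ⟨β, hβ, hd⟩ := exists_close_aux (hK n)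
        (hN (max M N) n (le_max_right _ _) hn) (α := α) ⟨h0, h1, hM _ (le_max_left _ _)⟩
      exact ⟨β, hβ, hd.le⟩
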